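/- Let X be a compact metric space with Lebesgue covering dimension dim(X) = d and let T : X → X be an injective continuous map. Assume that dim(P_n) < n/2 for every n ≤ 2d, where P_n is the set of periodic points of period at most n. Then the set of functions h ∈ C(X,[0,1]) for which the (2d+1)-delay observation map h_0^{2d} : X → [0,1]^{2d+1}, x ↦ (h(x), h(Tx), …, h(T^{2d}x)), is a topological embedding of X into [0,1]^{2d+1} is comeagre in C(X,[0,1]) with respect to the supremum metric. -/

import Mathlib

open Function Set Topology unitInterval

/-- A topological space `X` has Lebesgue covering dimension at most `m`:
every finite open cover admits a finite open refinement in which no point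
belongs to more than `m + 1` sets. -/
def CovDimLE (X : Type*) [TopologicalSpace X] (m : ℕ) : Prop :=
  ∀ (n : ℕ) (U : Fin n → Set X), (∀ i, IsOpen (U i)) → (⋃ i, U i) = univ →
    ∃ (k : ℕ) (V : Fin k → Set X), (∀ j, IsOpen (V j)) ∧ (⋃ j, V j) = univ ∧
      (∀ j, ∃ i, V j ⊆ U i) ∧ ∀ x : X, Nat.card {j : Fin k // x ∈ V j} ≤ m + 1

/-- The Lebesgue covering dimension of a topological space, as an element of `ℕ∞`
(`⊤` if no finite bound exists). -/
noncomputable def covDim (X : Type*) [TopologicalSpace X] : ℕ∞ :=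
  sInf {e : ℕ∞ | ∃ m : ℕ, e = m ∧ CovDimLE X m}

/-- The set of periodic points of `T` of period at most `n`. -/
def periodicLE {X : Type*} (T : X → X) (n : ℕ) : Set X :=
  {x | ∃ p, 1 ≤ p ∧ p ≤ n ∧ T^[p] x = x}

/-- The `(2d+1)`-delay observation map associated to an observable `h : C(X, [0,1])`
and the dynamics `T : X → X`: `x ↦ (h x, h (T x), …, h (T^{2d} x))`. -/
def delayMap {X : Type*} [TopologicalSpace X] (T : X → X) (d : ℕ)
    (h : C(X, I)) : X → (Fin (2 * d + 1) → I) :=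
  fun x i => h (T^[(i : ℕ)] x)

/-!
Fix `N = 2 * d + 1` and let `p` be the period of `x`, replaced by `N` if it is larger or infinite.
The points with a given `p` lie in a closed set of dimension `< p / 2`. Separating the delay vectors
of two points is an open condition on `h`, uniformly over compact sets of pairs; as the pairs of
distinct points are covered by countably many small compact sets, density is enough on each of them.
There `h` can be prescribed freely along disjoint orbit segments, so the question is one of general
position of maps into a vector space of delays.

If `x` and `T^k x` have the same delay vector, then the delay vector of length `a + 1 + k` at `x` is
periodic with period `k`. Such vectors form a `k`-dimensional subspace, which a generic map from a
set of dimension `a` avoids. When the orbit is periodic, counting `k` from the other point if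
necessary keeps these `a + 1 + k` points distinct.

If `x` and `y` lie on disjoint orbits, with dimensions `a < p / 2` and `b < q / 2` and `p ≤ q`, then
the delay vectors of length `q` along the set of `x` can be confined to finitely many affine
subspaces of dimension `a`; since `a + b < q`, those along the set of `y` generically avoid them.
-/

section CoveringDimension

variable {X : Type*} [TopologicalSpace X] {m : ℕ}

theorem CovDimLE.mono {n : ℕ} (hX : CovDimLE X m) (hmn : m ≤ n) : CovDimLE X n := by
  intro k U hU hcov
  obtain ⟨r, V, hVo, hVc, hVU, hVm⟩ := hX k U hU hcov
  exact ⟨r, V, hVo, hVc, hVU, fun x => (hVm x).trans (by omega)⟩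

theorem covDim_le_natCast_iff : covDim X ≤ m ↔ CovDimLE X m := by
  refine ⟨fun h => ?_, fun h => sInf_le ⟨m, rfl, h⟩⟩
  have hne : {e : ℕ∞ | ∃ m : ℕ, e = m ∧ CovDimLE X m}.Nonempty := by
    by_contra! hempty
    rw [covDim, hempty, sInf_empty, top_le_iff] at h
    exact ENat.natCast_ne_top m h
  obtain ⟨n, hn, hX⟩ := csInf_mem hne
  rw [covDim, hn, Nat.cast_le] at h
  exact hX.mono h

theorem CovDimLE.of_isClosedEmbedding {Y : Type*} [TopologicalSpace Y] (hY : CovDimLE Y m)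
    {f : X → Y} (hf : IsClosedEmbedding f) : CovDimLE X m := by
  intro n U hU hcov
  obtain _ | hne := isEmpty_or_nonempty X
  · exact ⟨0, Fin.elim0, fun j => j.elim0, Subsingleton.elim _ _, fun j => j.elim0, isEmptyElim⟩
  choose U' hU'o hU' using fun i => hf.isInducing.isOpen_iff.1 (hU i)
  have hrange : range f ⊆ ⋃ i, U' i := by
    rw [← preimage_eq_univ_iff, preimage_iUnion, ← hcov]
    exact iUnion_congr hU'
  have : Nonempty (Fin n) := by
    obtain ⟨i, -⟩ := mem_iUnion.1 (hrange (mem_range_self hne.some))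
    exact ⟨i⟩
  obtain ⟨k, V, hVo, hVc, hVU, hVm⟩ := hY n (fun i => U' i ∪ (range f)ᶜ)
    (fun i => (hU'o i).union hf.isClosed_range.isOpen_compl)
    (by rw [← iUnion_union, ← univ_subset_iff, ← union_compl_self (range f)]
        exact union_subset_union_left _ hrange)
  refine ⟨k, fun j => f ⁻¹' V j, fun j => (hVo j).preimage hf.continuous,
    by rw [← preimage_iUnion, hVc, preimage_univ], fun j => ?_, fun x => hVm (f x)⟩
  obtain ⟨i, hi⟩ := hVU j
  refine ⟨i, (preimage_mono hi).trans ?_⟩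
  rw [preimage_union, preimage_compl, preimage_range, compl_univ, union_empty, hU' i]

theorem CovDimLE.of_isClosed_subset {A B : Set X} (hB : CovDimLE B m) (hA : IsClosed A)
    (hAB : A ⊆ B) : CovDimLE A m :=
  hB.of_isClosedEmbedding (f := inclusion hAB)
    ⟨IsEmbedding.inclusion hAB, by
      rw [range_inclusion]; exact hA.preimage continuous_subtype_val⟩

theorem CovDimLE.exists_partitionOfUnity [CompactSpace X] [T2Space X] (hX : CovDimLE X m)
    {ι : Type*} {U : ι → Set X} (hU : ∀ i, IsOpen (U i)) (hcov : ⋃ i, U i = univ) :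
    ∃ (k : ℕ) (φ : PartitionOfUnity (Fin k) X) (i : Fin k → ι),
      φ.IsSubordinate (fun j => U (i j)) ∧ ∀ x, (φ.finsupport x).card ≤ m + 1 := by
  obtain ⟨t, ht⟩ := isCompact_univ.elim_finite_subcover U hU hcov.ge
  obtain ⟨k, W, hWo, hWc, hWU, hWm⟩ := hX t.card (fun i => U (t.equivFin.symm i))
    (fun i => hU _) (by
      rw [t.equivFin.symm.surjective.iUnion_comp fun i : t => U i, iUnion_subtype,
        ← univ_subset_iff]
      exact ht)
  choose i hi using hWU
  obtain ⟨φ, hφ⟩ := PartitionOfUnity.exists_isSubordinate isClosed_univ W hWo hWc.ge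
  refine ⟨k, φ, fun j => t.equivFin.symm (i j), fun j => (hφ j).trans (hi j), fun x => ?_⟩
  have hsupp : (φ.finsupport x : Set (Fin k)) ⊆ {j | x ∈ W j} := fun j hj =>
    hφ j (subset_tsupport _ ((φ.mem_finsupport x).1 hj))
  calc (φ.finsupport x).card = (φ.finsupport x : Set (Fin k)).ncard := (ncard_coe_finset _).symm
    _ ≤ {j | x ∈ W j}.ncard := ncard_le_ncard hsupp
    _ ≤ m + 1 := hWm x

end CoveringDimension

section NerveMap

variable {X V ι : Type*} [TopologicalSpace X] [NormedAddCommGroup V] [NormedSpace ℝ V]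

/-- The continuous map `x ↦ ∑ i, φ i x • w i` attached to a partition of unity `φ` and a family
of vectors `w`: the canonical map to the nerve of the supports of `φ`, followed by the simplexwise
affine map sending the vertex `i` to `w i`. -/
noncomputable def nerveMap (φ : PartitionOfUnity ι X) (w : ι → V) : C(X, V) where
  toFun x := ∑ᶠ i, φ i x • w i
  continuous_toFun := φ.continuous_finsum_smul fun _ _ _ => continuousAt_const

theorem nerveMap_mem_affineSpan (φ : PartitionOfUnity ι X) (w : ι → V) (x : X) :
    nerveMap φ w x ∈ affineSpan ℝ (w '' φ.finsupport x) :=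
  φ.finsum_smul_mem_convex (g := fun i _ => w i) (mem_univ x)
    (fun _ hi => subset_affineSpan ℝ _ (mem_image_of_mem w ((φ.mem_finsupport x).2 hi)))
    (AffineSubspace.convex _)

variable [CompactSpace X]

theorem dist_nerveMap_le {φ : PartitionOfUnity ι X} {w : ι → V} {F : C(X, V)} {ε : ℝ}
    (hε : 0 ≤ ε) (hw : ∀ i x, φ i x ≠ 0 → dist (w i) (F x) ≤ ε) : dist (nerveMap φ w) F ≤ ε :=
  (ContinuousMap.dist_le hε).2 fun x =>
    φ.finsum_smul_mem_convex (g := fun i _ => w i) (mem_univ x) (fun i hi => hw i x hi)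
      (convex_closedBall (F x) ε)

theorem CovDimLE.exists_dist_nerveMap_le [T2Space X] {m : ℕ} (hX : CovDimLE X m) (F : C(X, V))
    {ε : ℝ} (hε : 0 < ε) :
    ∃ (k : ℕ) (φ : PartitionOfUnity (Fin k) X) (v : Fin k → V) (δ : ℝ), 0 < δ ∧
      (∀ x, (φ.finsupport x).card ≤ m + 1) ∧ ∀ w, dist w v ≤ δ → dist (nerveMap φ w) F ≤ ε := by
  obtain ⟨k, φ, c, hφ, hcard⟩ := hX.exists_partitionOfUnity
    (U := fun c => F ⁻¹' Metric.ball (F c) (ε / 2))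
    (fun c => Metric.isOpen_ball.preimage F.continuous)
    (iUnion_eq_univ_iff.2 fun x => ⟨x, Metric.mem_ball_self (half_pos hε)⟩)
  refine ⟨k, φ, fun j => F (c j), ε / 2, half_pos hε, hcard,
    fun w hw => dist_nerveMap_le hε.le fun j x hjx => ?_⟩
  have hx : dist (F x) (F (c j)) < ε / 2 := hφ j (subset_tsupport _ hjx)
  calc dist (w j) (F x) ≤ dist (w j) (F (c j)) + dist (F (c j)) (F x) := dist_triangle ..
    _ ≤ ε / 2 + ε / 2 := by
      rw [dist_comm (F (c j))]
      exact add_le_add ((dist_le_pi_dist w _ j).trans hw) hx.le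
    _ = ε := add_halves ε

end NerveMap

section GeneralPosition

section DivisionRing

variable {k V P : Type*} [DivisionRing k] [AddCommGroup V] [Module k V] [AddTorsor V P]

theorem finrank_vectorSpan_union_le (s : Finset P) (E : AffineSubspace k P) :
    Module.finrank k (vectorSpan k (s ∪ E : Set P)) ≤
      Module.finrank k E.direction + s.card := by
  classical
  induction s using Finset.induction_on with
  | empty => rw [Finset.coe_empty, empty_union]; exact le_rfl
  | insert p s hp ih =>
    rw [Finset.coe_insert, insert_union, Finset.card_insert_of_notMem hp]
    exact (finrank_vectorSpan_insert_le_set k _ p).trans (by omega)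

theorem finrank_vectorSpan_le_of_card_le {n : ℕ} (s : Finset P) (hs : s.card ≤ n + 1) :
    Module.finrank k (vectorSpan k (s : Set P)) ≤ n := by
  classical
  obtain rfl | hne := s.eq_empty_or_nonempty
  · rw [Finset.coe_empty, vectorSpan_empty, finrank_bot]
    exact Nat.zero_le n
  · have hcard : s.card = (s.card - 1) + 1 := by have := hne.card_pos; omega
    have := finrank_vectorSpan_image_finset_le k id s hcard
    rw [Finset.image_id] at this
    omega

theorem disjoint_affineSpan_insert {s : Set P} {E : AffineSubspace k P} {u : P}
    (hs : Disjoint (affineSpan k s : Set P) E) (hu : u ∉ affineSpan k (s ∪ E)) :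
    Disjoint (affineSpan k (insert u s) : Set P) E := by
  rw [disjoint_left] at hs ⊢
  intro x hx hxE
  have hxsE : x ∈ affineSpan k (s ∪ E) := subset_affineSpan k _ (.inr hxE)
  have hle : affineSpan k s ≤ affineSpan k (s ∪ E) := affineSpan_mono k subset_union_left
  obtain rfl | ⟨p, hp⟩ := s.eq_empty_or_nonempty
  · obtain rfl : x = u := by simpa using hx
    exact hu hxsE
  have hps : p ∈ affineSpan k s := subset_affineSpan k s hp
  rw [SetLike.mem_coe, ← affineSpan_insert_affineSpan,
    AffineSubspace.mem_affineSpan_insert_iff hps] at hx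
  obtain ⟨c, q, hq, rfl⟩ := hx
  obtain rfl | hc := eq_or_ne c 0
  · exact hs (by simpa using hq) hxE
  · have := AffineSubspace.smul_vsub_vadd_mem _ c⁻¹ hxsE (hle hq) (hle hps)
    rw [vadd_vsub, smul_smul, inv_mul_cancel₀ hc, one_smul, vsub_vadd] at this
    exact hu this

end DivisionRing

variable {V : Type*} [NormedAddCommGroup V] [NormedSpace ℝ V]

theorem dense_compl_iUnion_affineSubspace [FiniteDimensional ℝ V] {κ : Type*} [Countable κ]
    {E : κ → AffineSubspace ℝ V} (hE : ∀ l, E l ≠ ⊤) : Dense (⋃ l, (E l : Set V))ᶜ := by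
  borelize V
  refine MeasureTheory.Measure.dense_of_ae (μ := MeasureTheory.Measure.addHaar) ?_
  exact MeasureTheory.compl_mem_ae_iff.2 (MeasureTheory.measure_iUnion_null fun l =>
    MeasureTheory.Measure.addHaar_affineSubspace _ _ (hE l))

theorem exists_dist_lt_notMem_affineSpan_union [FiniteDimensional ℝ V] {κ ι : Type*} [Countable κ]
    [Finite ι] {E : κ → AffineSubspace ℝ V} {b : ℕ}
    (hE : ∀ l, Module.finrank ℝ (E l).direction + b < Module.finrank ℝ V) (w : ι → V) (v : V)
    {ε : ℝ} (hε : 0 < ε) :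
    ∃ u, dist u v < ε ∧
      ∀ l (S : Finset ι), S.card ≤ b → u ∉ affineSpan ℝ (w '' S ∪ E l : Set V) := by
  classical
  have hproper : ∀ q : κ × {S : Finset ι // S.card ≤ b},
      affineSpan ℝ (w '' q.2.1 ∪ E q.1 : Set V) ≠ ⊤ := by
    rintro ⟨l, S, hS⟩ htop
    have hrank := finrank_vectorSpan_union_le (S.image w) (E l)
    rw [Finset.coe_image, ← direction_affineSpan, htop, AffineSubspace.direction_top,
      finrank_top] at hrank
    have := hE l
    have := Finset.card_image_le (s := S) (f := w)
    omega
  obtain ⟨u, hu, huv⟩ := (dense_compl_iUnion_affineSubspace hproper).exists_dist_lt v hε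
  rw [dist_comm] at huv
  exact ⟨u, huv, fun l S hS hmem => hu (mem_iUnion.2 ⟨(l, ⟨S, hS⟩), hmem⟩)⟩

theorem exists_dist_le_disjoint_affineSpan [FiniteDimensional ℝ V] {κ ι : Type*} [Countable κ]
    [Fintype ι] {E : κ → AffineSubspace ℝ V} {b : ℕ}
    (hE : ∀ l, Module.finrank ℝ (E l).direction + b < Module.finrank ℝ V) (v : ι → V) {ε : ℝ}
    (hε : 0 < ε) :
    ∃ w : ι → V, dist w v ≤ ε ∧ ∀ l (S : Finset ι), S.card ≤ b + 1 →
      Disjoint (affineSpan ℝ (w '' S) : Set V) (E l) := by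
  classical
  suffices H : ∀ s : Finset ι, ∃ w : ι → V, dist w v ≤ ε ∧ ∀ l, ∀ S ⊆ s, S.card ≤ b + 1 →
      Disjoint (affineSpan ℝ (w '' S) : Set V) (E l) by
    obtain ⟨w, hw, h⟩ := H Finset.univ
    exact ⟨w, hw, fun l S => h l S S.subset_univ⟩
  intro s
  induction s using Finset.induction_on with
  | empty =>
    refine ⟨v, by simpa using hε.le, fun l S hS _ => ?_⟩
    simp [Finset.subset_empty.1 hS]
  | insert t s hts ih =>
    obtain ⟨w, hw, hdisj⟩ := ih
    obtain ⟨u, huv, hu⟩ := exists_dist_lt_notMem_affineSpan_union hE w (v t) hε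
    have himage : ∀ S : Finset ι, t ∉ S → update w t u '' S = w '' S := fun S hS =>
      image_congr fun j hj => update_of_ne (ne_of_mem_of_not_mem hj hS) _ _
    refine ⟨update w t u, (dist_pi_le_iff hε.le).2 fun j => ?_, fun l S hSs hcard => ?_⟩
    · obtain rfl | hj := eq_or_ne j t
      · simpa using huv.le
      · simpa [hj] using (dist_le_pi_dist w v j).trans hw
    by_cases htS : t ∈ S
    · have hcard' := Finset.card_erase_of_mem htS
      rw [← Finset.insert_erase htS, Finset.coe_insert, image_insert_eq,
        himage _ (Finset.notMem_erase t S), update_self]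
      exact disjoint_affineSpan_insert
        (hdisj l _ (Finset.subset_insert_iff.1 hSs) (by omega)) (hu l _ (by omega))
    · rw [himage S htS]
      exact hdisj l S ((Finset.subset_insert_iff_of_notMem htS).1 hSs) hcard

variable {X : Type*} [TopologicalSpace X] [CompactSpace X] [T2Space X]

theorem CovDimLE.exists_dist_le_notMem_affineSubspace [FiniteDimensional ℝ V] {b : ℕ}
    (hX : CovDimLE X b) {κ : Type*} [Countable κ] {E : κ → AffineSubspace ℝ V}
    (hE : ∀ l, Module.finrank ℝ (E l).direction + b < Module.finrank ℝ V)
    (F : C(X, V)) {ε : ℝ} (hε : 0 < ε) :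
    ∃ G : C(X, V), dist G F ≤ ε ∧ ∀ l x, G x ∉ E l := by
  obtain ⟨r, φ, v, δ, hδ, hcard, happrox⟩ := hX.exists_dist_nerveMap_le F hε
  obtain ⟨w, hw, hdisj⟩ := exists_dist_le_disjoint_affineSpan hE v hδ
  exact ⟨nerveMap φ w, happrox w hw, fun l x =>
    disjoint_left.1 (hdisj l _ (hcard x)) (nerveMap_mem_affineSpan φ w x)⟩

theorem CovDimLE.exists_dist_le_mem_affineSubspace {a : ℕ} (hX : CovDimLE X a) (F : C(X, V))
    {ε : ℝ} (hε : 0 < ε) :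
    ∃ (G : C(X, V)) (𝓛 : Set (AffineSubspace ℝ V)), dist G F ≤ ε ∧ 𝓛.Finite ∧
      (∀ L ∈ 𝓛, FiniteDimensional ℝ L.direction ∧ Module.finrank ℝ L.direction ≤ a) ∧
      ∀ x, ∃ L ∈ 𝓛, G x ∈ L := by
  classical
  obtain ⟨r, φ, v, δ, hδ, hcard, happrox⟩ := hX.exists_dist_nerveMap_le F hε
  refine ⟨nerveMap φ v, (fun S : Finset (Fin r) => affineSpan ℝ (v '' S)) '' {S | S.card ≤ a + 1},
    happrox v (by simpa using hδ.le), toFinite _, ?_,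
    fun x => ⟨_, mem_image_of_mem _ (hcard x), nerveMap_mem_affineSpan φ v x⟩⟩
  rintro _ ⟨S, hS, rfl⟩
  rw [direction_affineSpan, ← Finset.coe_image]
  exact ⟨finiteDimensional_vectorSpan_of_finite ℝ (Finset.finite_toSet _),
    finrank_vectorSpan_le_of_card_le _ (Finset.card_image_le.trans hS)⟩

end GeneralPosition

section Observables

variable {X : Type*} [TopologicalSpace X] [CompactSpace X]

theorem exists_dist_le_comp_eq_of_isClosedEmbedding [NormalSpace X] {Y : Type*}
    [TopologicalSpace Y] [CompactSpace Y] {e : C(Y, X)} (he : IsClosedEmbedding e) (f : C(Y, ℝ))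
    (h : C(X, ℝ)) : ∃ g : C(X, ℝ), dist g h ≤ dist f (h.comp e) ∧ g.comp e = f := by
  obtain ⟨g, hg, hge⟩ := BoundedContinuousFunction.exists_extension_norm_eq_of_isClosedEmbedding
    (BoundedContinuousFunction.mkOfCompact (f - h.comp e)) he
  refine ⟨h + g.toContinuousMap, ?_, ?_⟩
  · rw [dist_eq_norm, dist_eq_norm, add_sub_cancel_left]
    exact hg.le
  · ext y
    have := congrFun hge y
    simp_all

theorem exists_dist_le_forall_comp_eq [T2Space X] {J : Type*} [Finite J] {A : J → Set X}
    [∀ j, CompactSpace (A j)] {u : J → X → X} (hu : ∀ j, Continuous (u j))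
    (hinj : ∀ j, InjOn (u j) (A j)) (hdisj : Pairwise (Disjoint on fun j => u j '' A j))
    (f : ∀ j, C(A j, ℝ)) (h : C(X, ℝ)) {ε : ℝ} (hε : 0 ≤ ε)
    (hf : ∀ j y, dist (f j y) (h (u j y)) ≤ ε) :
    ∃ g : C(X, ℝ), dist g h ≤ ε ∧ ∀ j (y : A j), g (u j y) = f j y := by
  let e : C(Σ j, A j, X) :=
    ⟨fun y => u y.1 y.2, continuous_sigma fun j => (hu j).comp continuous_subtype_val⟩
  have he : Injective e := by
    rintro ⟨i, y⟩ ⟨j, z⟩ heq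
    obtain rfl : i = j := by
      by_contra hij
      exact disjoint_left.1 (hdisj hij) (mem_image_of_mem _ y.2) ⟨z, z.2, heq.symm⟩
    obtain rfl : y = z := Subtype.ext (hinj i y.2 z.2 heq)
    rfl
  obtain ⟨g, hg, hge⟩ := exists_dist_le_comp_eq_of_isClosedEmbedding
    (e.continuous.isClosedEmbedding he) (ContinuousMap.sigma f) h
  exact ⟨g, hg.trans ((ContinuousMap.dist_le hε).2 fun y => hf y.1 y.2),
    fun j y => DFunLike.congr_fun hge ⟨j, y⟩⟩

theorem dense_setOf_coe_comp_mem {S : Set C(X, ℝ)} (hS : Dense S) :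
    Dense {h : C(X, I) | (⟨Subtype.val, continuous_subtype_val⟩ : C(I, ℝ)).comp h ∈ S} := by
  intro h
  refine (mem_closure_iff_nhds_basis Metric.nhds_basis_closedBall).2 fun r hr => ?_
  obtain ⟨ε, hε0, hε1, hεr⟩ : ∃ ε : ℝ, 0 < ε ∧ ε ≤ 1 / 2 ∧ 2 * ε ≤ r :=
    ⟨min (1 / 2) (r / 2), by positivity, min_le_left _ _, by
      have := min_le_right (1 / 2) (r / 2); linarith⟩
  -- Shrinking `[0, 1]` to `[ε, 1 - ε]` leaves room for a perturbation of size `ε`.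
  obtain ⟨g, hgS, hg⟩ := hS.exists_dist_lt ⟨fun x => (1 - 2 * ε) * (h x : ℝ) + ε, by fun_prop⟩ hε0
  have hgx : ∀ x, |(1 - 2 * ε) * (h x : ℝ) + ε - g x| ≤ ε := fun x =>
    (ContinuousMap.dist_apply_le_dist x).trans hg.le
  simp only [abs_le] at hgx
  have hmem : ∀ x, g x ∈ I := fun x => by
    obtain ⟨hlow, hupp⟩ := hgx x
    obtain ⟨h0, h1⟩ := (h x).2
    constructor <;> nlinarith
  refine ⟨⟨fun x => ⟨g x, hmem x⟩, by fun_prop⟩, hgS, ?_⟩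
  refine (ContinuousMap.dist_le hr.le).2 fun x => ?_
  obtain ⟨hlow, hupp⟩ := hgx x
  obtain ⟨h0, h1⟩ := (h x).2
  rw [Subtype.dist_eq, Real.dist_eq, abs_le]
  constructor <;> simp only [ContinuousMap.coe_mk] <;> nlinarith

theorem eventually_residual_forall_comp_ne {Z ι : Type*} [TopologicalSpace Z]
    {K : Set Z} (hK : IsCompact K) {u v : Z → ι → X} (hu : Continuous u) (hv : Continuous v)
    (hdense : Dense {g : C(X, ℝ) | ∀ z ∈ K, ⇑g ∘ u z ≠ ⇑g ∘ v z}) :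
    ∀ᶠ h : C(X, I) in residual C(X, I), ∀ z ∈ K, ⇑h ∘ u z ≠ ⇑h ∘ v z := by
  have hdense' : Dense {h : C(X, I) | ∀ z ∈ K, ⇑h ∘ u z ≠ ⇑h ∘ v z} := by
    refine (dense_setOf_coe_comp_mem hdense).mono fun h hh z hz heq => ?_
    exact hh z hz (congrArg (Subtype.val ∘ ·) heq)
  refine residual_of_dense_open ?_ hdense'
  have hcont : ∀ {w : Z → ι → X}, Continuous w →
      Continuous fun q : C(X, I) × Z => ⇑q.1 ∘ w q.2 := fun hw =>
    continuous_pi fun i => ContinuousEval.continuous_eval.comp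
      (continuous_fst.prodMk ((continuous_apply i).comp (hw.comp continuous_snd)))
  refine isOpen_iff_mem_nhds.2 fun h hh => ?_
  exact hK.eventually_forall_of_forall_eventually fun z hz =>
    (isOpen_ne_fun (hcont hu) (hcont hv)).mem_nhds (hh z hz)

end Observables

theorem eventually_forall_of_nhdsWithin {Z H : Type*} [TopologicalSpace Z]
    [SecondCountableTopology Z] {l : Filter H} [CountableInterFilter l] {S : Set Z}
    {P : H → Z → Prop} (hS : ∀ z ∈ S, ∃ K ∈ 𝓝[S] z, ∀ᶠ h in l, ∀ w ∈ K, P h w) :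
    ∀ᶠ h in l, ∀ z ∈ S, P h z := by
  choose! K hK hP using hS
  obtain ⟨t, htS, htc, hcov⟩ := TopologicalSpace.countable_cover_nhdsWithin hK
  filter_upwards [(eventually_countable_ball htc).2 fun z hz => hP z (htS hz)] with h hh z hz
  obtain ⟨w, hw, hzw⟩ := mem_iUnion₂.1 (hcov hz)
  exact hh w hw z hzw

theorem exists_closedBall_pairwise_disjoint_image {X Y J : Type*} [PseudoMetricSpace X]
    [TopologicalSpace Y] [T2Space Y] [Finite J] {u : J → X → Y} (hu : ∀ j, Continuous (u j))
    {c : J → X} (hc : Injective fun j => u j (c j)) :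
    ∃ δ > 0, Pairwise (Disjoint on fun j => u j '' Metric.closedBall (c j) δ) := by
  obtain ⟨U, hU, hdisj⟩ := (finite_range fun j => u j (c j)).t2_separation
  have hsub : ∀ᶠ δ in 𝓝[>] (0 : ℝ), ∀ j, Metric.closedBall (c j) δ ⊆ u j ⁻¹' U (u j (c j)) :=
    Filter.eventually_all.2 fun j => nhdsWithin_le_nhds <|
      eventually_closedBall_subset ((hu j).continuousAt.preimage_mem_nhds
        ((hU _).2.mem_nhds (hU _).1))
  obtain ⟨δ, hδ, hδ0⟩ := (hsub.and self_mem_nhdsWithin).exists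
  exact ⟨δ, hδ0, fun i j hij =>
    (hdisj (mem_range_self i) (mem_range_self j) (hc.ne hij)).mono
      (image_subset_iff.2 (hδ i)) (image_subset_iff.2 (hδ j))⟩

section OrbitSegment

variable {X : Type*}

/-- The orbit segment `(x, T x, …, T^{n-1} x)`. The `n`-delay vector of an observable `h` at `x` is
`h ∘ orbitSegment T n x`. -/
def orbitSegment (T : X → X) (n : ℕ) (x : X) (i : Fin n) : X :=
  T^[i] x

@[fun_prop]
theorem continuous_orbitSegment [TopologicalSpace X] {T : X → X} (hT : Continuous T) (n : ℕ) :
    Continuous (orbitSegment T n) :=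
  continuous_pi fun i => hT.iterate i

theorem orbitSegment_injective {T : X → X} (hT : Injective T) {n : ℕ} {x : X}
    (hx : minimalPeriod T x = 0 ∨ n ≤ minimalPeriod T x) : Injective (orbitSegment T n x) := by
  intro i j hij
  wlog hlt : i ≤ j generalizing i j
  · exact (this hij.symm (le_of_not_ge hlt)).symm
  have hper : IsPeriodicPt T (j - i) x := iterate_cancel hT hij.symm
  have hzero : (j - i : ℕ) = 0 := by
    obtain h0 | hn := hx
    · exact Nat.eq_zero_of_zero_dvd (h0 ▸ hper.minimalPeriod_dvd)
    · exact hper.eq_zero_of_lt_minimalPeriod (by omega)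
  omega

theorem exists_iterate_eq_orbitSegment_injective {T : X → X} (hT : Injective T) {a k : ℕ} {x : X}
    (hx : minimalPeriod T x = 0 ∨ 2 * a < minimalPeriod T x) (hk : T^[k] x ≠ x) :
    ∃ m ≠ 0, T^[m] x = T^[k] x ∧ Injective (orbitSegment T (a + 1 + m) x) ∨
      T^[m] (T^[k] x) = x ∧ Injective (orbitSegment T (a + 1 + m) (T^[k] x)) := by
  set s := minimalPeriod T x with hs
  have hmod : T^[k % s] x = T^[k] x := iterate_mod_minimalPeriod_eq
  have hm : k % s ≠ 0 := fun h0 => hk (by rw [← hmod, h0, iterate_zero_apply])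
  by_cases hshort : s = 0 ∨ a + 1 + k % s ≤ s
  · exact ⟨k % s, hm, .inl ⟨hmod, orbitSegment_injective hT hshort⟩⟩
  -- If the step `k % s` is too long, then `s - k % s`, from `T^[k] x` back to `x`, is at most `a`.
  have hlt : k % s < s := Nat.mod_lt _ (by omega)
  have hperiod : minimalPeriod T (T^[k] x) = s :=
    minimalPeriod_apply_iterate (minimalPeriod_pos_iff_mem_periodicPts.1 (by omega)) k
  refine ⟨s - k % s, by omega, .inr ⟨?_, orbitSegment_injective hT (.inr (by omega))⟩⟩
  rw [← hmod, ← iterate_add_apply, Nat.sub_add_cancel hlt.le, hs, iterate_minimalPeriod]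

/-- The `R`-linear map extending a vector of length `p` to the vector of length `n` with period `p`
and the same initial entries; delay vectors along periodic orbits lie in its range. -/
def periodicExtension (R : Type*) [Semiring R] (p n : ℕ) [NeZero p] :
    (Fin p → R) →ₗ[R] (Fin n → R) :=
  LinearMap.funLeft R R fun i : Fin n => Fin.ofNat p i

theorem periodicExtension_comp_orbitSegment {R : Type*} [Semiring R] {p n : ℕ} [NeZero p]
    {T : X → X} {g : X → R} {x : X} (hg : ∀ i < n, g (T^[i % p] x) = g (T^[i] x)) :
    periodicExtension R p n (g ∘ orbitSegment T p x) = g ∘ orbitSegment T n x :=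
  funext fun i => hg i i.2

theorem apply_mod_eq_of_apply_add_eq {α : Type*} {g : ℕ → α} {k n : ℕ}
    (hg : ∀ i, i + k < n → g (i + k) = g i) : ∀ i < n, g (i % k) = g i := by
  intro i
  induction i using Nat.strong_induction_on with
  | _ i ih =>
    intro hi
    obtain hik | hki := lt_or_ge i k
    · rw [Nat.mod_eq_of_lt hik]
    obtain rfl | hk := Nat.eq_zero_or_pos k
    · rw [Nat.mod_zero]
    rw [Nat.mod_eq_sub_mod hki, ih (i - k) (by omega) (by omega), ← hg _ (by omega),
      Nat.sub_add_cancel hki]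

end OrbitSegment

section Separation

variable {X : Type*}

section Dense

variable [TopologicalSpace X] [CompactSpace X] [T2Space X] {T : X → X}

theorem dense_forall_comp_orbitSegment_ne_iterate (hTc : Continuous T) (hTi : Injective T)
    {N a k : ℕ} [NeZero k] (haN : a < N) {A : Set X} [CompactSpace A] (hdim : CovDimLE A a)
    (hdisj : Pairwise (Disjoint on fun i : Fin (a + 1 + k) => T^[i] '' A)) :
    Dense {g : C(X, ℝ) | ∀ x ∈ A, ⇑g ∘ orbitSegment T N x ≠ ⇑g ∘ orbitSegment T N (T^[k] x)} := by
  intro h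
  refine (mem_closure_iff_nhds_basis Metric.nhds_basis_closedBall).2 fun ε hε => ?_
  obtain ⟨G, hG, hGE⟩ := hdim.exists_dist_le_notMem_affineSubspace
    (E := fun _ : Unit => (LinearMap.range (periodicExtension ℝ k (a + 1 + k))).toAffineSubspace)
    (fun _ => by
      have := LinearMap.finrank_range_le (periodicExtension ℝ k (a + 1 + k))
      rw [Module.finrank_fin_fun] at this
      rw [Submodule.toAffineSubspace_direction, Module.finrank_fin_fun]
      omega)
    ⟨fun x => ⇑h ∘ orbitSegment T (a + 1 + k) x, by fun_prop⟩ hε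
  obtain ⟨g, hg, hgG⟩ := exists_dist_le_forall_comp_eq
    (fun i : Fin (a + 1 + k) => hTc.iterate i) (fun i => (hTi.iterate i).injOn) hdisj
    (fun i => (ContinuousMap.eval i).comp G) h hε.le fun i x =>
      (dist_le_pi_dist _ _ i).trans ((ContinuousMap.dist_apply_le_dist x).trans hG)
  refine ⟨g, fun x hx heq => hGE () ⟨x, hx⟩ ⟨⇑g ∘ orbitSegment T k x, ?_⟩, hg⟩
  -- If the delay vectors at `x` and `T^[k] x` agree, then the one at `x` has period `k`.
  have hperiodic := apply_mod_eq_of_apply_add_eq (g := fun i => g (T^[i] x)) (k := k)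
    (n := a + 1 + k) fun i hi => by
      rw [iterate_add_apply]
      exact (congrFun heq ⟨i, by omega⟩).symm
  rw [periodicExtension_comp_orbitSegment hperiodic]
  exact funext fun i => hgG i ⟨x, hx⟩

theorem exists_dist_le_comp_orbitSegment_eq (hTc : Continuous T) (hTi : Injective T) {p q : ℕ}
    {A B : Set X} [CompactSpace A] [CompactSpace B]
    (hdisj : Pairwise (Disjoint on
      Sum.elim (fun i : Fin p => T^[i] '' A) fun j : Fin q => T^[j] '' B))
    (F : C(A, Fin p → ℝ)) (G : C(B, Fin q → ℝ)) (h : C(X, ℝ)) {ε : ℝ} (hε : 0 ≤ ε)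
    (hF : ∀ x, dist (F x) (⇑h ∘ orbitSegment T p x) ≤ ε)
    (hG : ∀ y, dist (G y) (⇑h ∘ orbitSegment T q y) ≤ ε) :
    ∃ g : C(X, ℝ), dist g h ≤ ε ∧ (∀ x : A, ⇑g ∘ orbitSegment T p x = F x) ∧
      ∀ y : B, ⇑g ∘ orbitSegment T q y = G y := by
  let C : Fin p ⊕ Fin q → Set X := Sum.elim (fun _ => A) fun _ => B
  let t : Fin p ⊕ Fin q → ℕ := Sum.elim (↑) (↑)
  have hC : ∀ j, CompactSpace (C j) := by rintro (_ | _) <;> assumption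
  obtain ⟨g, hg, hgf⟩ := exists_dist_le_forall_comp_eq (A := C) (fun j => hTc.iterate (t j))
    (fun j => (hTi.iterate (t j)).injOn) (by convert hdisj using 2 with j; ext (i | j) <;> rfl)
    (Sum.rec (fun i => (ContinuousMap.eval i).comp F) fun j => (ContinuousMap.eval j).comp G) h hε
    (by
      rintro (i | j) y
      · exact (dist_le_pi_dist _ _ i).trans (hF y)
      · exact (dist_le_pi_dist _ _ j).trans (hG y))
  exact ⟨g, hg, fun x => funext fun i => hgf (.inl i) x, fun y => funext fun j => hgf (.inr j) y⟩

theorem dense_forall_comp_orbitSegment_ne (hTc : Continuous T) (hTi : Injective T)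
    {N a b p q : ℕ} [NeZero p] (hqN : q ≤ N) (hab : a + b < q) {A B : Set X}
    [CompactSpace A] [CompactSpace B] (hA : CovDimLE A a) (hB : CovDimLE B b)
    (hAT : ∀ x ∈ A, ∀ i < q, T^[i % p] x = T^[i] x)
    (hdisj : Pairwise (Disjoint on
      Sum.elim (fun i : Fin p => T^[i] '' A) fun j : Fin q => T^[j] '' B)) :
    Dense {g : C(X, ℝ) | ∀ z ∈ A ×ˢ B,
      ⇑g ∘ orbitSegment T N z.1 ≠ ⇑g ∘ orbitSegment T N z.2} := by
  intro h
  refine (mem_closure_iff_nhds_basis Metric.nhds_basis_closedBall).2 fun ε hε => ?_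
  -- Delay vectors over `A` are confined to finitely many affine subspaces of dimension at most `a`;
  -- those over `B` are then moved off the `p`-periodic extensions of these subspaces.
  obtain ⟨F, 𝓛, hF, h𝓛, hrank, hF𝓛⟩ := hA.exists_dist_le_mem_affineSubspace
    ⟨fun x => ⇑h ∘ orbitSegment T p x, by fun_prop⟩ hε
  have := h𝓛.countable.to_subtype
  obtain ⟨G, hG, hGE⟩ := hB.exists_dist_le_notMem_affineSubspace
    (E := fun L : 𝓛 => L.1.map (periodicExtension ℝ p q).toAffineMap)
    (fun L => by
      have := Submodule.finrank_map_le (periodicExtension ℝ p q) L.1.direction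
      have := (hrank L L.2).2
      rw [AffineSubspace.map_direction, LinearMap.toAffineMap_linear, Module.finrank_fin_fun]
      omega)
    ⟨fun y => ⇑h ∘ orbitSegment T q y, by fun_prop⟩ hε
  obtain ⟨g, hg, hgF, hgG⟩ := exists_dist_le_comp_orbitSegment_eq hTc hTi hdisj F G h hε.le
    (fun x => (ContinuousMap.dist_apply_le_dist x).trans hF)
    fun y => (ContinuousMap.dist_apply_le_dist y).trans hG
  refine ⟨g, ?_, hg⟩
  rintro ⟨x, y⟩ ⟨hx, hy⟩ heq
  obtain ⟨L, hL, hFL⟩ := hF𝓛 ⟨x, hx⟩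
  have hGF : G ⟨y, hy⟩ = periodicExtension ℝ p q (F ⟨x, hx⟩) := by
    rw [← hgF, ← hgG, periodicExtension_comp_orbitSegment fun i hi => congrArg g (hAT x hx i hi)]
    exact funext fun i => (congrFun heq ⟨i, by omega⟩).symm
  refine hGE ⟨L, hL⟩ ⟨y, hy⟩ ?_
  rw [hGF]
  exact AffineSubspace.mem_map_of_mem (periodicExtension ℝ p q).toAffineMap hFL

end Dense

section Residual

variable [MetricSpace X] [CompactSpace X] {T : X → X}

theorem eventually_residual_forall_comp_orbitSegment_ne_iterate (hTc : Continuous T)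
    (hTi : Injective T) {N a k : ℕ} [NeZero k] (haN : a < N) {Q : Set X} (hQ : IsClosed Q)
    (hdim : CovDimLE Q a) :
    ∀ᶠ h : C(X, I) in residual C(X, I), ∀ x ∈ {x ∈ Q | Injective (orbitSegment T (a + 1 + k) x)},
      ⇑h ∘ orbitSegment T N x ≠ ⇑h ∘ orbitSegment T N (T^[k] x) := by
  refine eventually_forall_of_nhdsWithin fun x ⟨_, hx⟩ => ?_
  obtain ⟨δ, hδ, hdisj⟩ := exists_closedBall_pairwise_disjoint_image
    (fun i : Fin (a + 1 + k) => hTc.iterate i) hx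
  have hA : IsClosed (Q ∩ Metric.closedBall x δ) := hQ.inter Metric.isClosed_closedBall
  have := isCompact_iff_compactSpace.1 hA.isCompact
  refine ⟨Q ∩ Metric.closedBall x δ, ?_, eventually_residual_forall_comp_ne hA.isCompact
    (by fun_prop) ((continuous_orbitSegment hTc N).comp (hTc.iterate k)) ?_⟩
  · exact Filter.inter_mem (Filter.mem_of_superset self_mem_nhdsWithin fun y hy => hy.1)
      (mem_nhdsWithin_of_mem_nhds (Metric.closedBall_mem_nhds x hδ))
  · exact dense_forall_comp_orbitSegment_ne_iterate hTc hTi haN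
      (hdim.of_isClosed_subset hA inter_subset_left) fun i j hij =>
        (hdisj hij).mono (image_mono inter_subset_right) (image_mono inter_subset_right)

theorem eventually_residual_forall_comp_orbitSegment_ne (hTc : Continuous T) (hTi : Injective T)
    {N a b p q : ℕ} [NeZero p] (hqN : q ≤ N) (hab : a + b < q) {Q Q' : Set X}
    (hQ : IsClosed Q) (hQ' : IsClosed Q') (hdim : CovDimLE Q a) (hdim' : CovDimLE Q' b)
    (hQT : ∀ x ∈ Q, ∀ i < q, T^[i % p] x = T^[i] x) :
    ∀ᶠ h : C(X, I) in residual C(X, I), ∀ z ∈ {z ∈ Q ×ˢ Q' |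
        Injective (Sum.elim (orbitSegment T p z.1) (orbitSegment T q z.2))},
      ⇑h ∘ orbitSegment T N z.1 ≠ ⇑h ∘ orbitSegment T N z.2 := by
  refine eventually_forall_of_nhdsWithin fun ⟨x, y⟩ ⟨_, hxy⟩ => ?_
  obtain ⟨δ, hδ, hdisj⟩ := exists_closedBall_pairwise_disjoint_image
    (u := Sum.elim (fun i : Fin p => T^[i]) fun j : Fin q => T^[j])
    (c := Sum.elim (fun _ => x) fun _ => y)
    (by rintro (i | j); exacts [hTc.iterate i, hTc.iterate j])
    (by convert hxy using 1; ext (i | j) <;> rfl)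
  have hA : IsClosed (Q ∩ Metric.closedBall x δ) := hQ.inter Metric.isClosed_closedBall
  have hB : IsClosed (Q' ∩ Metric.closedBall y δ) := hQ'.inter Metric.isClosed_closedBall
  have := isCompact_iff_compactSpace.1 hA.isCompact
  have := isCompact_iff_compactSpace.1 hB.isCompact
  refine ⟨(Q ∩ Metric.closedBall x δ) ×ˢ (Q' ∩ Metric.closedBall y δ), ?_,
    eventually_residual_forall_comp_ne (hA.isCompact.prod hB.isCompact) (by fun_prop)
      (by fun_prop) (dense_forall_comp_orbitSegment_ne hTc hTi hqN hab
        (hdim.of_isClosed_subset hA inter_subset_left)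
        (hdim'.of_isClosed_subset hB inter_subset_left) (fun x hx => hQT x hx.1)
        fun i j hij => (hdisj hij).mono ?_ ?_)⟩
  · rw [← prod_inter_prod]
    exact Filter.inter_mem (Filter.mem_of_superset self_mem_nhdsWithin fun z hz => hz.1)
      (mem_nhdsWithin_of_mem_nhds (prod_mem_nhds (Metric.closedBall_mem_nhds x hδ)
        (Metric.closedBall_mem_nhds y hδ)))
  · obtain i | i := i <;> exact image_mono inter_subset_right
  · obtain j | j := j <;> exact image_mono inter_subset_right

end Residual

end Separation

section PeriodicStratum

variable {X : Type*} {T : X → X} {N p : ℕ}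

/-- For `p < N` the set of points satisfying `T^p x = x`, and the whole space for `p ≥ N`. If the
period of `x` is replaced by `N` whenever it is larger or infinite, then `x` lies in the stratum
indexed by its period. -/
def periodicStratum (T : X → X) (N p : ℕ) : Set X :=
  {x | p < N → IsPeriodicPt T p x}

theorem isClosed_periodicStratum [TopologicalSpace X] [T2Space X] (hT : Continuous T) :
    IsClosed (periodicStratum T N p) := by
  by_cases hp : p < N
  · simp only [periodicStratum, hp, forall_const]
    exact isClosed_fixedPoints (hT.iterate p)
  · simp [periodicStratum, hp]

theorem iterate_mem_periodicStratum {x : X} (hx : x ∈ periodicStratum T N p) (k : ℕ) :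
    T^[k] x ∈ periodicStratum T N p :=
  fun hp => (hx hp).apply_iterate k

theorem iterate_mod_eq_of_mem_periodicStratum {x : X} (hx : x ∈ periodicStratum T N p) {i : ℕ}
    (hi : i < N) : T^[i % p] x = T^[i] x := by
  obtain hp | hp := lt_or_ge p N
  · exact (hx hp).iterate_mod_apply i
  · rw [Nat.mod_eq_of_lt (hi.trans_le hp)]

theorem exists_mem_periodicStratum (T : X → X) (hN : 0 < N) (x : X) :
    ∃ p, 0 < p ∧ p ≤ N ∧ x ∈ periodicStratum T N p ∧
      (minimalPeriod T x = 0 ∨ p ≤ minimalPeriod T x) := by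
  by_cases hx : minimalPeriod T x = 0 ∨ N ≤ minimalPeriod T x
  · exact ⟨N, hN, le_rfl, fun h => (h.false).elim, hx⟩
  · exact ⟨minimalPeriod T x, by omega, by omega, fun _ => isPeriodicPt_minimalPeriod T x,
      .inr le_rfl⟩

end PeriodicStratum

section Embedding

variable {X : Type*} [MetricSpace X] [CompactSpace X] {T : X → X} {N : ℕ} {a : ℕ → ℕ}

theorem eventually_residual_comp_orbitSegment_ne_of_iterate_ne (hTc : Continuous T)
    (hTi : Injective T) (hN : 0 < N) (ha : ∀ p, 0 < p → p ≤ N → 2 * a p < p)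
    (hdim : ∀ p, 0 < p → p ≤ N → CovDimLE (periodicStratum T N p) (a p)) :
    ∀ᶠ h : C(X, I) in residual C(X, I), ∀ x k, T^[k] x ≠ x →
      ⇑h ∘ orbitSegment T N x ≠ ⇑h ∘ orbitSegment T N (T^[k] x) := by
  have hsep : ∀ᶠ h : C(X, I) in residual C(X, I), ∀ p m, 0 < p → p ≤ N → m ≠ 0 →
      ∀ x ∈ {x ∈ periodicStratum T N p | Injective (orbitSegment T (a p + 1 + m) x)},
        ⇑h ∘ orbitSegment T N x ≠ ⇑h ∘ orbitSegment T N (T^[m] x) := by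
    simp only [eventually_countable_forall]
    intro p m hp hpN hm
    have : NeZero m := ⟨hm⟩
    have := ha p hp hpN
    exact eventually_residual_forall_comp_orbitSegment_ne_iterate hTc hTi (by omega)
      (isClosed_periodicStratum hTc) (hdim p hp hpN)
  filter_upwards [hsep] with h hh x k hk
  obtain ⟨p, hp, hpN, hx, hpx⟩ := exists_mem_periodicStratum T hN x
  obtain ⟨m, hm, ⟨hmk, hinj⟩ | ⟨hmk, hinj⟩⟩ := exists_iterate_eq_orbitSegment_injective hTi
    (hpx.imp_right (ha p hp hpN).trans_le) hk
  · rw [← hmk]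
    exact hh p m hp hpN hm x ⟨hx, hinj⟩
  · have := hh p m hp hpN hm _ ⟨iterate_mem_periodicStratum hx k, hinj⟩
    rw [hmk] at this
    exact this.symm

theorem eventually_residual_comp_orbitSegment_ne_of_forall_iterate_ne (hTc : Continuous T)
    (hTi : Injective T) (hN : 0 < N) (ha : ∀ p, 0 < p → p ≤ N → 2 * a p < p)
    (hdim : ∀ p, 0 < p → p ≤ N → CovDimLE (periodicStratum T N p) (a p)) :
    ∀ᶠ h : C(X, I) in residual C(X, I), ∀ x y, (∀ i j, T^[i] x ≠ T^[j] y) →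
      ⇑h ∘ orbitSegment T N x ≠ ⇑h ∘ orbitSegment T N y := by
  have hsep : ∀ᶠ h : C(X, I) in residual C(X, I), ∀ p q, 0 < p → p ≤ q → q ≤ N →
      ∀ z ∈ {z ∈ periodicStratum T N p ×ˢ periodicStratum T N q |
        Injective (Sum.elim (orbitSegment T p z.1) (orbitSegment T q z.2))},
        ⇑h ∘ orbitSegment T N z.1 ≠ ⇑h ∘ orbitSegment T N z.2 := by
    simp only [eventually_countable_forall]
    intro p q hp hpq hqN
    have : NeZero p := ⟨hp.ne'⟩
    have hap := ha p hp (hpq.trans hqN)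
    have haq := ha q (hp.trans_le hpq) hqN
    exact eventually_residual_forall_comp_orbitSegment_ne hTc hTi hqN (by omega)
      (isClosed_periodicStratum hTc) (isClosed_periodicStratum hTc) (hdim p hp (hpq.trans hqN))
      (hdim q (hp.trans_le hpq) hqN)
      fun x hx i hi => iterate_mod_eq_of_mem_periodicStratum hx (hi.trans_le hqN)
  filter_upwards [hsep] with h hh x y hxy
  obtain ⟨p, hp, hpN, hx, hpx⟩ := exists_mem_periodicStratum T hN x
  obtain ⟨q, hq, hqN, hy, hqy⟩ := exists_mem_periodicStratum T hN y
  wlog hpq : p ≤ q generalizing x y p q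
  · exact (this y x (fun i j => (hxy j i).symm) q hq hqN hy hqy p hp hpN hx hpx
      (le_of_not_ge hpq)).symm
  exact hh p q hp hpq hqN (x, y) ⟨⟨hx, hy⟩, (orbitSegment_injective hTi hpx).sumElim
    (orbitSegment_injective hTi hqy) fun i j => hxy i j⟩

theorem eventually_residual_injective_comp_orbitSegment (hTc : Continuous T)
    (hTi : Injective T) (hN : 0 < N) (ha : ∀ p, 0 < p → p ≤ N → 2 * a p < p)
    (hdim : ∀ p, 0 < p → p ≤ N → CovDimLE (periodicStratum T N p) (a p)) :
    ∀ᶠ h : C(X, I) in residual C(X, I), Injective fun x => ⇑h ∘ orbitSegment T N x := by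
  filter_upwards [eventually_residual_comp_orbitSegment_ne_of_iterate_ne hTc hTi hN ha hdim,
    eventually_residual_comp_orbitSegment_ne_of_forall_iterate_ne hTc hTi hN ha hdim]
    with h hsame hdisj x y hxy
  have hmeet : ∃ i j, T^[i] x = T^[j] y := by
    by_contra! hne
    exact hdisj x y hne hxy
  obtain ⟨i, j, hij⟩ := hmeet
  wlog hle : i ≤ j generalizing x y i j
  · exact (this hxy.symm j i hij.symm (le_of_not_ge hle)).symm
  have hx : T^[j - i] y = x := hTi.iterate i <| by
    rw [← iterate_add_apply, Nat.add_sub_cancel' hle, hij]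
  by_contra hne
  refine hsame y (j - i) (fun h => hne (hx.symm.trans h)) ?_
  rw [hx]
  exact hxy.symm

end Embedding

theorem exists_two_mul_lt_covDimLE_of_two_mul_covDim_lt {X : Type*} [TopologicalSpace X] {n : ℕ}
    (hX : 2 * covDim X < n) : ∃ a : ℕ, 2 * a < n ∧ CovDimLE X a := by
  have htop : covDim X ≠ ⊤ := fun h => by simp [h, ENat.mul_top] at hX
  obtain ⟨a, ha⟩ := ENat.ne_top_iff_exists.1 htop
  exact ⟨a, by rw [← ha] at hX; exact_mod_cast hX, covDim_le_natCast_iff.1 ha.ge⟩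

theorem stmt0 {X : Type*} [MetricSpace X] [CompactSpace X]
    (T : X → X) (hTc : Continuous T) (hTi : Function.Injective T)
    (d : ℕ) (hdim : covDim X = d)
    (hper : ∀ n : ℕ, 1 ≤ n → n ≤ 2 * d →
      2 * covDim (periodicLE T n) < (n : ℕ∞)) :
    {h : C(X, I) | IsEmbedding (delayMap T d h)} ∈ residual C(X, I) := by
  have hstrata : ∀ p, 0 < p → p ≤ 2 * d + 1 →
      ∃ a, 2 * a < p ∧ CovDimLE (periodicStratum T (2 * d + 1) p) a := fun p hp hpN => by
    obtain hlt | rfl := hpN.lt_or_eq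
    · obtain ⟨a, ha, hPa⟩ := exists_two_mul_lt_covDimLE_of_two_mul_covDim_lt
        (hper p hp (Nat.lt_succ_iff.1 hlt))
      exact ⟨a, ha, hPa.of_isClosed_subset (isClosed_periodicStratum hTc)
        fun x hx => ⟨p, hp, le_rfl, hx hlt⟩⟩
    · exact ⟨d, by omega, (covDim_le_natCast_iff.1 hdim.le).of_isClosedEmbedding
        (isClosed_periodicStratum hTc).isClosedEmbedding_subtypeVal⟩
  choose! a ha hdim using hstrata
  filter_upwards [eventually_residual_injective_comp_orbitSegment hTc hTi (by omega) ha hdim]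
    with h hinj
  have hcont : Continuous (delayMap T d h) :=
    continuous_pi fun i => h.continuous.comp (hTc.iterate i)
  exact (hcont.isClosedEmbedding hinj).isEmbedding
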